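/- Let d ≥ 1 and μ = -1 (the focusing case). If u is a classical solution of the mass-critical NLS on (0, ∞) × ℝ^d, then its pseudoconformal transform v(t, x) := t^{-d/2} · conj(u)(1/t, x/t) · e^{i |x|²/(4t)} is also a classical solution of the focusing mass-critical NLS on (0, ∞) × ℝ^d, where conj denotes complex conjugation. -/

import Mathlib

open MeasureTheory

noncomputable def spaceLaplacian {d : ℕ} (f : EuclideanSpace ℝ (Fin d) → ℂ)
    (x : EuclideanSpace ℝ (Fin d)) : ℂ :=
  ∑ j : Fin d, fderiv ℝ (fun y => fderiv ℝ f y (EuclideanSpace.single j 1)) x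
    (EuclideanSpace.single j 1)

def IsNLSSolution (d : ℕ) (μ : ℝ) (I : Set ℝ) (u : ℝ → EuclideanSpace ℝ (Fin d) → ℂ) : Prop :=
  ContDiffOn ℝ (⊤ : ℕ∞) (fun p : ℝ × EuclideanSpace ℝ (Fin d) => u p.1 p.2)
    (I ×ˢ (Set.univ : Set (EuclideanSpace ℝ (Fin d)))) ∧
  ∀ t ∈ I, ∀ x, Complex.I * deriv (fun s => u s x) t + spaceLaplacian (u t) x
    = (μ : ℂ) * ((‖u t x‖ ^ ((4 : ℝ) / d) : ℝ) : ℂ) * u t x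

/-! Pulling the phase `exp (i|x|² / 4t)` out of `i∂ₜ + Δ` leaves the extra term
`(i/t) (x · ∇ + d/2)`. Acting on `t ^ (-d/2) conj u(1/t, x/t)`, that term cancels exactly what `i∂ₜ`
produces from the amplitude and from the dilation `x ↦ x/t`. Hence the transform intertwines the
linear Schrödinger operator with itself, up to the factor `t⁻²`, which is also the factor that
`|v| ^ (4/d)` gains from the amplitude: this is where mass-criticality enters. -/

open scoped RealInnerProductSpace

section SpaceLaplacian

theorem fderiv_fderiv_mul {𝕜 E 𝔸 : Type*} [NontriviallyNormedField 𝕜] [NormedAddCommGroup E]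
    [NormedSpace 𝕜 E] [NormedCommRing 𝔸] [NormedAlgebra 𝕜 𝔸] {f g : E → 𝔸} {x : E}
    (hf : ContDiffAt 𝕜 2 f x) (hg : ContDiffAt 𝕜 2 g x) (v : E) :
    fderiv 𝕜 (fun y => fderiv 𝕜 (fun z => f z * g z) y v) x v =
      f x * fderiv 𝕜 (fun y => fderiv 𝕜 g y v) x v + 2 * (fderiv 𝕜 f x v * fderiv 𝕜 g x v) +
        fderiv 𝕜 (fun y => fderiv 𝕜 f y v) x v * g x := by
  have leibniz : (fun y => fderiv 𝕜 (fun z => f z * g z) y v) =ᶠ[nhds x]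
      fun y => f y * fderiv 𝕜 g y v + g y * fderiv 𝕜 f y v := by
    filter_upwards [hf.eventually (by simp), hg.eventually (by simp)] with y hfy hgy
    rw [fderiv_fun_mul (hfy.differentiableAt (by simp)) (hgy.differentiableAt (by simp))]
    simp
  have differentiableAt_fderiv {h : E → 𝔸} (hh : ContDiffAt 𝕜 2 h x) :
      DifferentiableAt 𝕜 (fun y => fderiv 𝕜 h y v) x :=
    ((hh.fderiv_right (m := 1) one_add_one_eq_two.le).differentiableAt (by simp)).clm_apply
      (differentiableAt_const v)
  have hf₁ := hf.differentiableAt (by simp)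
  have hg₁ := hg.differentiableAt (by simp)
  have hf₂ := differentiableAt_fderiv hf
  have hg₂ := differentiableAt_fderiv hg
  rw [leibniz.fderiv_eq, fderiv_fun_add (hf₁.fun_mul hg₂) (hg₁.fun_mul hf₂),
    fderiv_fun_mul hf₁ hg₂, fderiv_fun_mul hg₁ hf₂]
  simp only [add_apply, smul_apply, smul_eq_mul]
  ring

theorem fderiv_const_mul_apply {E : Type*} [NormedAddCommGroup E] [NormedSpace ℝ E] (a : ℂ)
    (f : E → ℂ) (x v : E) : fderiv ℝ (fun y => a * f y) x v = a * fderiv ℝ f x v :=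
  DFunLike.congr_fun (congr_fun (fderiv_const_smul_field a) x) v

theorem fderiv_conj_apply {E : Type*} [NormedAddCommGroup E] [NormedSpace ℝ E]
    (f : E → ℂ) (x v : E) :
    fderiv ℝ (fun y => starRingEnd ℂ (f y)) x v = starRingEnd ℂ (fderiv ℝ f x v) :=
  DFunLike.congr_fun fderiv_star v

theorem fderiv_comp_smul_apply {E : Type*} [NormedAddCommGroup E] [NormedSpace ℝ E] (c : ℝ)
    (f : E → ℂ) (x v : E) : fderiv ℝ (fun y => f (c • y)) x v = c * fderiv ℝ f (c • x) v := by
  rw [fderiv_comp_smul, smul_apply, Complex.real_smul]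

variable {d : ℕ} {f g : EuclideanSpace ℝ (Fin d) → ℂ} {x : EuclideanSpace ℝ (Fin d)}

theorem spaceLaplacian_mul (hf : ContDiffAt ℝ 2 f x) (hg : ContDiffAt ℝ 2 g x) :
    spaceLaplacian (fun y => f y * g y) x =
      f x * spaceLaplacian g x +
        2 * ∑ j, fderiv ℝ f x (EuclideanSpace.single j 1) *
          fderiv ℝ g x (EuclideanSpace.single j 1) +
        spaceLaplacian f x * g x := by
  simp only [spaceLaplacian, fderiv_fderiv_mul hf hg, Finset.sum_add_distrib, Finset.mul_sum,
    Finset.sum_mul]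

theorem spaceLaplacian_const_mul (a : ℂ) (f : EuclideanSpace ℝ (Fin d) → ℂ)
    (x : EuclideanSpace ℝ (Fin d)) :
    spaceLaplacian (fun y => a * f y) x = a * spaceLaplacian f x := by
  simp only [spaceLaplacian, fderiv_const_mul_apply, Finset.mul_sum]

theorem spaceLaplacian_conj (f : EuclideanSpace ℝ (Fin d) → ℂ) (x : EuclideanSpace ℝ (Fin d)) :
    spaceLaplacian (fun y => starRingEnd ℂ (f y)) x = starRingEnd ℂ (spaceLaplacian f x) := by
  simp only [spaceLaplacian, fderiv_conj_apply, map_sum]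

theorem spaceLaplacian_comp_smul (c : ℝ) (f : EuclideanSpace ℝ (Fin d) → ℂ)
    (x : EuclideanSpace ℝ (Fin d)) :
    spaceLaplacian (fun y => f (c • y)) x = (c : ℂ) ^ 2 * spaceLaplacian f (c • x) := by
  simp only [spaceLaplacian, fderiv_comp_smul_apply, fderiv_const_mul_apply, Finset.mul_sum]
  refine Finset.sum_congr rfl fun j _ => ?_
  rw [fderiv_comp_smul_apply c (fun y => fderiv ℝ f y (EuclideanSpace.single j 1)), sq, mul_assoc]

theorem sum_coord_mul_apply_single (L : EuclideanSpace ℝ (Fin d) →L[ℝ] ℂ)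
    (x : EuclideanSpace ℝ (Fin d)) :
    ∑ j, (x j : ℂ) * L (EuclideanSpace.single j 1) = L x := by
  conv_rhs => rw [← (EuclideanSpace.basisFun (Fin d) ℝ).sum_repr x]
  simp

end SpaceLaplacian

section QuadraticPhase

variable {E : Type*} [NormedAddCommGroup E]

/-- The pseudoconformal phase `exp (i|x|² / 4t)`, equal to `1` at the junk value `t = 0`. -/
noncomputable def quadraticPhase (t : ℝ) (x : E) : ℂ :=
  Complex.exp (Complex.I * ((‖x‖ ^ 2 / (4 * t) : ℝ) : ℂ))

theorem norm_quadraticPhase (t : ℝ) (x : E) : ‖quadraticPhase t x‖ = 1 :=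
  Complex.norm_exp_I_mul_ofReal _

theorem hasDerivAt_quadraticPhase {t : ℝ} (ht : t ≠ 0) (x : E) :
    HasDerivAt (fun s => quadraticPhase s x)
      (-(Complex.I * ‖x‖ ^ 2 / (4 * t ^ 2)) * quadraticPhase t x) t := by
  have hquot : HasDerivAt (fun s => ‖x‖ ^ 2 / (4 * s)) (-(‖x‖ ^ 2 / (4 * t ^ 2))) t := by
    refine ((hasDerivAt_const t (‖x‖ ^ 2)).div ((hasDerivAt_id t).const_mul 4)
      (mul_ne_zero four_ne_zero ht)).congr_deriv ?_
    simp only [id]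
    field_simp
    ring
  refine (hquot.ofReal_comp.const_mul Complex.I).cexp.congr_deriv ?_
  rw [quadraticPhase]
  push_cast
  ring

variable [InnerProductSpace ℝ E]

theorem contDiffAt_quadraticPhase {n : WithTop ℕ∞} {p : ℝ × E} (hp : p.1 ≠ 0) :
    ContDiffAt ℝ n (fun q : ℝ × E => quadraticPhase q.1 q.2) p :=
  (contDiffAt_const.mul (Complex.ofRealCLM.contDiff.contDiffAt.comp p
    ((contDiffAt_snd.norm_sq ℝ).div (contDiffAt_const.mul contDiffAt_fst)
      (mul_ne_zero four_ne_zero hp)))).cexp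

theorem contDiff_quadraticPhase {n : WithTop ℕ∞} (t : ℝ) :
    ContDiff ℝ n (quadraticPhase t : E → ℂ) :=
  (contDiff_const.mul (Complex.ofRealCLM.contDiff.comp
    ((contDiff_id.norm_sq ℝ).div_const (4 * t)))).cexp

theorem fderiv_quadraticPhase (t : ℝ) (x v : E) :
    fderiv ℝ (quadraticPhase t) x v =
      Complex.I / (2 * t) * (⟪x, v⟫ : ℝ) * quadraticPhase t x := by
  have hphase : HasFDerivAt (fun y : E => ((‖y‖ ^ 2 / (4 * t) : ℝ) : ℂ)) _ x :=
    Complex.ofRealCLM.hasFDerivAt.comp x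
      ((hasStrictFDerivAt_norm_sq x).hasFDerivAt.mul_const (4 * t)⁻¹)
  have hexp := (hphase.const_mul Complex.I).cexp.fderiv
  unfold quadraticPhase
  rw [hexp]
  simp only [Complex.ofReal_div, Complex.ofReal_pow, Complex.ofReal_mul, Complex.ofReal_ofNat,
    mul_inv_rev, ContinuousLinearMap.comp_smulₛₗ, Real.ringHom_apply,
    ContinuousLinearMap.comp_smul, smul_apply, ContinuousLinearMap.comp_apply, coe_innerSL_apply,
    Complex.ofRealCLM_apply, nsmul_eq_mul, Nat.cast_ofNat, Complex.real_smul, Complex.ofReal_inv,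
    smul_eq_mul]
  ring

theorem fderiv_fderiv_quadraticPhase (t : ℝ) (x v : E) :
    fderiv ℝ (fun y => fderiv ℝ (quadraticPhase t) y v) x v =
      (Complex.I / (2 * t) * ‖v‖ ^ 2 - (⟪x, v⟫ : ℝ) ^ 2 / (2 * t) ^ 2) * quadraticPhase t x := by
  have hlin : HasFDerivAt (fun y : E => Complex.I / (2 * t) * (⟪y, v⟫ : ℝ))
      ((Complex.I / (2 * t)) • (Complex.ofRealCLM ∘L (innerSL ℝ).flip v)) x :=
    (Complex.ofRealCLM ∘L (innerSL ℝ).flip v).hasFDerivAt.const_mul _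
  have hQ : DifferentiableAt ℝ (quadraticPhase t) x :=
    (contDiff_quadraticPhase (n := 1) t).differentiable one_ne_zero x
  simp only [fderiv_quadraticPhase]
  rw [(hlin.fun_mul hQ.hasFDerivAt).fderiv]
  simp only [add_apply, smul_apply, ContinuousLinearMap.comp_apply, ContinuousLinearMap.flip_apply,
    innerSL_apply_apply, Complex.ofRealCLM_apply, smul_eq_mul, fderiv_quadraticPhase,
    real_inner_self_eq_norm_sq, Complex.ofReal_pow]
  linear_combination
    (⟪x, v⟫ : ℂ) ^ 2 / (2 * t) ^ 2 * quadraticPhase t x * Complex.I_sq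

theorem spaceLaplacian_quadraticPhase {d : ℕ} (t : ℝ) (x : EuclideanSpace ℝ (Fin d)) :
    spaceLaplacian (quadraticPhase t) x =
      (Complex.I / (2 * t) * d - ‖x‖ ^ 2 / (2 * t) ^ 2) * quadraticPhase t x := by
  have norm_sq : (‖x‖ ^ 2 : ℂ) = ∑ j, (x j : ℂ) ^ 2 := by
    exact_mod_cast EuclideanSpace.real_norm_sq_eq x
  simp only [spaceLaplacian, fderiv_fderiv_quadraticPhase, ← Finset.sum_mul,
    Finset.sum_sub_distrib, norm_sq, Finset.sum_div]
  simp [EuclideanSpace.inner_single_right, mul_comm]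

end QuadraticPhase

section SchrodingerOperator

variable {d : ℕ}

/-- The linear Schrödinger operator `i∂ₜ + Δ`, the left-hand side of the NLS. -/
noncomputable def schrodingerOperator (u : ℝ → EuclideanSpace ℝ (Fin d) → ℂ) (t : ℝ)
    (x : EuclideanSpace ℝ (Fin d)) : ℂ :=
  Complex.I * deriv (fun s => u s x) t + spaceLaplacian (u t) x

theorem spaceLaplacian_mul_quadraticPhase {w : EuclideanSpace ℝ (Fin d) → ℂ}
    {x : EuclideanSpace ℝ (Fin d)} (hw : ContDiffAt ℝ 2 w x) (t : ℝ) :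
    spaceLaplacian (fun y => w y * quadraticPhase t y) x =
      (spaceLaplacian w x + Complex.I / t * fderiv ℝ w x x +
        (Complex.I / (2 * t) * d - ‖x‖ ^ 2 / (2 * t) ^ 2) * w x) * quadraticPhase t x := by
  have gradient_pairing : ∑ j, fderiv ℝ w x (EuclideanSpace.single j 1) *
      fderiv ℝ (quadraticPhase t) x (EuclideanSpace.single j 1) =
        Complex.I / (2 * t) * fderiv ℝ w x x * quadraticPhase t x := by
    rw [← sum_coord_mul_apply_single (fderiv ℝ w x) x, Finset.mul_sum, Finset.sum_mul]
    refine Finset.sum_congr rfl fun j _ => ?_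
    simp only [fderiv_quadraticPhase, EuclideanSpace.inner_single_right, conj_trivial, one_mul]
    ring
  rw [spaceLaplacian_mul hw (contDiff_quadraticPhase t).contDiffAt, gradient_pairing,
    spaceLaplacian_quadraticPhase]
  ring

theorem schrodingerOperator_mul_quadraticPhase {w : ℝ → EuclideanSpace ℝ (Fin d) → ℂ} {t : ℝ}
    {x : EuclideanSpace ℝ (Fin d)} (ht : t ≠ 0) (hwt : DifferentiableAt ℝ (fun s => w s x) t)
    (hwx : ContDiffAt ℝ 2 (w t) x) :
    schrodingerOperator (fun s y => w s y * quadraticPhase s y) t x =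
      (schrodingerOperator w t x + Complex.I / t * (fderiv ℝ (w t) x x + d / 2 * w t x)) *
        quadraticPhase t x := by
  have hderiv := (hwt.hasDerivAt.fun_mul (hasDerivAt_quadraticPhase ht x)).deriv
  simp only [schrodingerOperator, spaceLaplacian_mul_quadraticPhase hwx]
  rw [hderiv]
  linear_combination
    -(‖x‖ ^ 2 / (4 * t ^ 2) * w t x * quadraticPhase t x : ℂ) * Complex.I_sq

end SchrodingerOperator

section Pseudoconformal

theorem hasDerivAt_comp_inversion {E F : Type*} [NormedAddCommGroup E] [NormedSpace ℝ E]
    [NormedAddCommGroup F] [NormedSpace ℝ F] {u : ℝ → E → F} {t : ℝ} {x : E} (ht : t ≠ 0)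
    (hu : DifferentiableAt ℝ (fun p : ℝ × E => u p.1 p.2) (1 / t, (1 / t) • x)) :
    HasDerivAt (fun s => u (1 / s) ((1 / s) • x))
      (-(1 / t) ^ 2 • (deriv (fun s => u s ((1 / t) • x)) (1 / t) +
        fderiv ℝ (u (1 / t)) ((1 / t) • x) x)) t := by
  set U : ℝ × E → F := fun p => u p.1 p.2
  set p : ℝ × E := (1 / t, (1 / t) • x)
  have time_derivative : deriv (fun s => u s ((1 / t) • x)) (1 / t) = fderiv ℝ U p (1, 0) :=
    (hu.hasFDerivAt.comp_hasDerivAt (f := fun s => (s, (1 / t) • x)) (1 / t)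
      ((hasDerivAt_id _).prodMk (hasDerivAt_const _ _))).deriv
  have space_derivative : fderiv ℝ (u (1 / t)) ((1 / t) • x) x = fderiv ℝ U p (0, x) := by
    have h : HasFDerivAt (u (1 / t)) _ ((1 / t) • x) :=
      hu.hasFDerivAt.comp ((1 / t) • x) (hasFDerivAt_prodMk_right (1 / t) ((1 / t) • x))
    rw [h.fderiv]
    simp
  have hinv : HasDerivAt (fun s : ℝ => 1 / s) (-(1 / t) ^ 2) t := by
    simpa only [one_div, inv_pow] using hasDerivAt_inv ht
  refine (hu.hasFDerivAt.comp_hasDerivAt t (hinv.prodMk (hinv.smul_const x))).congr_deriv ?_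
  rw [time_derivative, space_derivative, ← map_add, ← map_smul]
  simp

variable {d : ℕ} {u : ℝ → EuclideanSpace ℝ (Fin d) → ℂ} {t : ℝ} {x : EuclideanSpace ℝ (Fin d)}

/-- The pseudoconformal transform without its phase: the time-reversing, `L²`-normalised change of
variables `t ^ (-d/2) conj u(1/t, x/t)`. It is meant for `t > 0`. -/
noncomputable def conformalRescaling (u : ℝ → EuclideanSpace ℝ (Fin d) → ℂ) (t : ℝ)
    (x : EuclideanSpace ℝ (Fin d)) : ℂ :=
  ((t ^ (-(d : ℝ) / 2) : ℝ) : ℂ) * (starRingEnd ℂ) (u (1 / t) ((1 / t) • x))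

/-- The pseudoconformal transform `v(t, x) = t ^ (-d/2) conj u(1/t, x/t) exp (i|x|² / 4t)`. -/
noncomputable def pseudoconformalTransform (u : ℝ → EuclideanSpace ℝ (Fin d) → ℂ) (t : ℝ)
    (x : EuclideanSpace ℝ (Fin d)) : ℂ :=
  conformalRescaling u t x * quadraticPhase t x

theorem contDiffAt_conformalRescaling {n : WithTop ℕ∞} (ht : t ≠ 0)
    (hu : ContDiffAt ℝ n (fun p : ℝ × EuclideanSpace ℝ (Fin d) => u p.1 p.2)
      (1 / t, (1 / t) • x)) :
    ContDiffAt ℝ n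
      (fun p : ℝ × EuclideanSpace ℝ (Fin d) => conformalRescaling u p.1 p.2) (t, x) := by
  have hinv : ContDiffAt ℝ n (fun p : ℝ × EuclideanSpace ℝ (Fin d) => 1 / p.1) (t, x) :=
    contDiffAt_const.div contDiffAt_fst ht
  have hrescaled : ContDiffAt ℝ n
      (fun p : ℝ × EuclideanSpace ℝ (Fin d) => u (1 / p.1) ((1 / p.1) • p.2)) (t, x) :=
    hu.comp (f := fun p => (1 / p.1, (1 / p.1) • p.2)) (t, x)
      (hinv.prodMk (hinv.smul contDiffAt_snd))
  exact (Complex.ofRealCLM.contDiff.contDiffAt.comp (t, x)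
    (contDiffAt_fst.rpow_const_of_ne ht)).mul
      (Complex.conjCLE.contDiff.contDiffAt.comp (t, x) hrescaled)

theorem contDiffAt_pseudoconformalTransform {n : WithTop ℕ∞} (ht : t ≠ 0)
    (hu : ContDiffAt ℝ n (fun p : ℝ × EuclideanSpace ℝ (Fin d) => u p.1 p.2)
      (1 / t, (1 / t) • x)) :
    ContDiffAt ℝ n
      (fun p : ℝ × EuclideanSpace ℝ (Fin d) => pseudoconformalTransform u p.1 p.2) (t, x) :=
  (contDiffAt_conformalRescaling ht hu).mul (contDiffAt_quadraticPhase ht)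

theorem hasDerivAt_conformalRescaling (ht : t ≠ 0)
    (hu : DifferentiableAt ℝ (fun p : ℝ × EuclideanSpace ℝ (Fin d) => u p.1 p.2)
      (1 / t, (1 / t) • x)) :
    HasDerivAt (fun s => conformalRescaling u s x)
      (-(d / (2 * t)) * conformalRescaling u t x -
        (1 / t) ^ 2 * (t ^ (-(d : ℝ) / 2) : ℝ) *
          starRingEnd ℂ (deriv (fun s => u s ((1 / t) • x)) (1 / t) +
            fderiv ℝ (u (1 / t)) ((1 / t) • x) x)) t := by
  have hamplitude := (Real.hasDerivAt_rpow_const (p := -(d : ℝ) / 2) (Or.inl ht)).ofReal_comp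
  refine (hamplitude.mul (hasDerivAt_comp_inversion ht hu).star).congr_deriv ?_
  rw [Real.rpow_sub_one ht, conformalRescaling]
  simp only [← starRingEnd_apply, Complex.real_smul, map_mul, Complex.conj_ofReal]
  push_cast
  ring

theorem fderiv_conformalRescaling_self (u : ℝ → EuclideanSpace ℝ (Fin d) → ℂ) (t : ℝ)
    (x : EuclideanSpace ℝ (Fin d)) :
    fderiv ℝ (conformalRescaling u t) x x =
      (1 / t) * (t ^ (-(d : ℝ) / 2) : ℝ) *
        starRingEnd ℂ (fderiv ℝ (u (1 / t)) ((1 / t) • x) x) := by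
  unfold conformalRescaling
  rw [fderiv_const_mul_apply, fderiv_conj_apply (fun y => u (1 / t) ((1 / t) • y)),
    fderiv_comp_smul_apply]
  simp only [map_mul, Complex.conj_ofReal]
  push_cast
  ring

theorem spaceLaplacian_conformalRescaling (u : ℝ → EuclideanSpace ℝ (Fin d) → ℂ) (t : ℝ)
    (x : EuclideanSpace ℝ (Fin d)) :
    spaceLaplacian (conformalRescaling u t) x =
      (1 / t) ^ 2 * (t ^ (-(d : ℝ) / 2) : ℝ) *
        starRingEnd ℂ (spaceLaplacian (u (1 / t)) ((1 / t) • x)) := by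
  unfold conformalRescaling
  rw [spaceLaplacian_const_mul, spaceLaplacian_conj (fun y => u (1 / t) ((1 / t) • y)),
    spaceLaplacian_comp_smul]
  simp only [map_mul, map_pow, Complex.conj_ofReal]
  push_cast
  ring

theorem schrodingerOperator_pseudoconformalTransform (ht : t ≠ 0)
    (hu : ContDiffAt ℝ 2 (fun p : ℝ × EuclideanSpace ℝ (Fin d) => u p.1 p.2)
      (1 / t, (1 / t) • x)) :
    schrodingerOperator (pseudoconformalTransform u) t x =
      (1 / t) ^ 2 * ((t ^ (-(d : ℝ) / 2) : ℝ) *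
        starRingEnd ℂ (schrodingerOperator u (1 / t) ((1 / t) • x)) * quadraticPhase t x) := by
  have hw := contDiffAt_conformalRescaling ht hu
  have hwt := hasDerivAt_conformalRescaling ht (hu.differentiableAt (by simp))
  have hwx : ContDiffAt ℝ 2 (conformalRescaling u t) x :=
    hw.comp x (contDiffAt_const.prodMk contDiffAt_id)
  unfold pseudoconformalTransform
  rw [schrodingerOperator_mul_quadraticPhase ht hwt.differentiableAt hwx]
  simp only [schrodingerOperator]
  rw [hwt.deriv, fderiv_conformalRescaling_self, spaceLaplacian_conformalRescaling]
  simp only [map_add, map_mul, Complex.conj_I]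
  ring

theorem norm_pseudoconformalTransform (ht : 0 ≤ t) :
    ‖pseudoconformalTransform u t x‖ = t ^ (-(d : ℝ) / 2) * ‖u (1 / t) ((1 / t) • x)‖ := by
  rw [pseudoconformalTransform, conformalRescaling, norm_mul, norm_mul, norm_quadraticPhase,
    mul_one, RCLike.norm_conj, Complex.norm_of_nonneg (Real.rpow_nonneg ht _)]

theorem norm_pseudoconformalTransform_rpow (hd : d ≠ 0) (ht : 0 ≤ t) :
    ‖pseudoconformalTransform u t x‖ ^ ((4 : ℝ) / d) =
      (1 / t) ^ 2 * ‖u (1 / t) ((1 / t) • x)‖ ^ ((4 : ℝ) / d) := by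
  have mass_critical : -(d : ℝ) / 2 * (4 / d) = -2 := by
    field_simp
    norm_num
  rw [norm_pseudoconformalTransform ht, Real.mul_rpow (Real.rpow_nonneg ht _) (norm_nonneg _),
    ← Real.rpow_mul ht, mass_critical, Real.rpow_neg ht, Real.rpow_two, one_div, inv_pow]

end Pseudoconformal

theorem nls_pseudoconformal_invariance_general (d : ℕ) (hd : 1 ≤ d) (μ : ℝ) {I J : Set ℝ}
    (hI : IsOpen I) (hJ : J ⊆ Set.Ioi 0) (hJI : Set.MapsTo (fun t => 1 / t) J I)
    (u : ℝ → EuclideanSpace ℝ (Fin d) → ℂ) (hu : IsNLSSolution d μ I u) :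
    IsNLSSolution d μ J (pseudoconformalTransform u) := by
  obtain ⟨smooth, nls⟩ := hu
  have smoothAt {t : ℝ} (ht : t ∈ J) (x : EuclideanSpace ℝ (Fin d)) :
      ContDiffAt ℝ (⊤ : ℕ∞) (fun p : ℝ × EuclideanSpace ℝ (Fin d) => u p.1 p.2)
        (1 / t, (1 / t) • x) :=
    smooth.contDiffAt ((hI.prod isOpen_univ).mem_nhds ⟨hJI ht, Set.mem_univ _⟩)
  constructor
  · rintro ⟨t, x⟩ ⟨ht, -⟩
    exact (contDiffAt_pseudoconformalTransform (hJ ht).ne' (smoothAt ht x)).contDiffWithinAt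
  · intro t ht x
    change schrodingerOperator (pseudoconformalTransform u) t x = _
    have nls' : schrodingerOperator u (1 / t) ((1 / t) • x) = _ := nls (1 / t) (hJI ht) _
    rw [schrodingerOperator_pseudoconformalTransform (hJ ht).ne'
      (contDiffAt_infty.mp (smoothAt ht x) 2), nls',
      norm_pseudoconformalTransform_rpow (by omega) (hJ ht).le, pseudoconformalTransform,
      conformalRescaling]
    simp only [map_mul, Complex.conj_ofReal]
    push_cast
    ring

theorem nls_pseudoconformal_invariance (d : ℕ) (hd : 1 ≤ d)
    (u : ℝ → EuclideanSpace ℝ (Fin d) → ℂ)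
    (hu : IsNLSSolution d (-1) (Set.Ioi (0:ℝ)) u) :
    IsNLSSolution d (-1) (Set.Ioi (0:ℝ))
      (fun t x => ((t ^ (-(d : ℝ) / 2) : ℝ) : ℂ) *
        (starRingEnd ℂ) (u (1 / t) ((1 / t) • x)) *
        Complex.exp (Complex.I * ((‖x‖ ^ 2 / (4 * t) : ℝ) : ℂ))) :=
  nls_pseudoconformal_invariance_general d hd (-1) isOpen_Ioi subset_rfl
    (fun _ ht => Set.mem_Ioi.mpr (one_div_pos.mpr ht)) u hu
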